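/- arXiv:2210.04487 — 5 statements merged into one kernel-verified Lean document; each statement's English description precedes it below -/
import Mathlib

section
/- Let F₄ = GF(4), let n ≥ 1, and let g₁, g₂ be monic divisors of Xⁿ−1 in F₄[X]. Let f, a, b ∈ F₄[X] and suppose f−1 and Xⁿ−1 are coprime in F₄[X]. If (Xⁿ−1) divides a·g₁·f − b·g₂ and (Xⁿ−1) divides a·g₁ − b·g₂·f, then (Xⁿ−1) divides a·g₁ and (Xⁿ−1) divides b·g₂. -/
open Polynomial

set_option synthInstance.maxHeartbeats 1000000
set_option maxHeartbeats 1000000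

noncomputable section

/-- The field `F₄ = GF(4)`. -/
abbrev F4 : Type := GaloisField 2 2

/-- The coefficient vector `[p]ₙ ∈ F₄ⁿ` of the remainder of `p` modulo `Xⁿ - 1`
(coefficient of `X^i` in position `i`). -/
def coeffVec (n : ℕ) (p : Polynomial F4) : Fin n → F4 :=
  fun i => (p % (X ^ n - 1)).coeff i

/-- The Hermitian inner product `⟨u,v⟩_h = ∑ i, u i * (v i)²` on `F₄^m`. -/
def hermInner {m : ℕ} (u v : Fin m → F4) : F4 := ∑ i, u i * (v i) ^ 2

/-- The Hermitian inner product on `F₄ⁿ × F₄ⁿ`: the sum of the Hermitian inner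
products of the two components. -/
def hermInner2 {n : ℕ} (u v : (Fin n → F4) × (Fin n → F4)) : F4 :=
  hermInner u.1 v.1 + hermInner u.2 v.2

/-- The conjugate transform `f̄ := f₀² + ∑_{i=1}^{n-1} f_i² X^{n-i}`, where `f` is first
reduced modulo `Xⁿ - 1`. -/
def conjT (n : ℕ) (f : Polynomial F4) : Polynomial F4 :=
  C (((f % (X ^ n - 1)).coeff 0) ^ 2) +
    ∑ i ∈ Finset.Ico 1 n, C (((f % (X ^ n - 1)).coeff i) ^ 2) * X ^ (n - i)

/-- The Hermitian dual generator `g^{⊥h}(X) := ∑_{j=0}^{deg h} (h_j)² X^{deg h - j}`,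
the conjugate reciprocal of the check polynomial `h = (Xⁿ-1)/g`. -/
def dualGen (n : ℕ) (g : Polynomial F4) : Polynomial F4 :=
  ∑ j ∈ Finset.range (((X ^ n - 1) / g).natDegree + 1),
    C ((((X ^ n - 1) / g).coeff j) ^ 2) * X ^ (((X ^ n - 1) / g).natDegree - j)

lemma hermInner_add_right {m : ℕ} (u v w : Fin m → F4) :
    hermInner u (v + w) = hermInner u v + hermInner u w := by
  simp only [hermInner, Pi.add_apply]
  rw [← Finset.sum_add_distrib]
  refine Finset.sum_congr rfl fun i _ => ?_
  rw [add_pow_char (v i) (w i) 2, mul_add]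

lemma hermInner_smul_right {m : ℕ} (c : F4) (u v : Fin m → F4) :
    hermInner u (c • v) = c ^ 2 * hermInner u v := by
  simp only [hermInner, Pi.smul_apply, smul_eq_mul, mul_pow, Finset.mul_sum]
  exact Finset.sum_congr rfl fun i _ => by ring

/-- The Hermitian dual code `C^{⊥h} = {v | ∀ u ∈ C, ⟨u,v⟩_h = 0}` of a linear code in `F₄^m`. -/
def hermDual {m : ℕ} (Ccode : Submodule F4 (Fin m → F4)) : Submodule F4 (Fin m → F4) where
  carrier := {v | ∀ u ∈ Ccode, hermInner u v = 0}
  zero_mem' := by intro u _; simp [hermInner]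
  add_mem' := by
    intro v w hv hw u hu
    rw [hermInner_add_right, hv u hu, hw u hu, add_zero]
  smul_mem' := by
    intro c v hv u hu
    rw [hermInner_smul_right, hv u hu, mul_zero]

lemma hermInner2_add_right {n : ℕ} (u v w : (Fin n → F4) × (Fin n → F4)) :
    hermInner2 u (v + w) = hermInner2 u v + hermInner2 u w := by
  simp only [hermInner2, Prod.fst_add, Prod.snd_add, hermInner_add_right]
  ring

lemma hermInner2_smul_right {n : ℕ} (c : F4) (u v : (Fin n → F4) × (Fin n → F4)) :
    hermInner2 u (c • v) = c ^ 2 * hermInner2 u v := by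
  simp only [hermInner2, Prod.smul_fst, Prod.smul_snd, hermInner_smul_right]
  ring

/-- The Hermitian dual code of a linear code in `F₄ⁿ × F₄ⁿ` (identified with `F₄^{2n}`). -/
def hermDualPair {n : ℕ} (Ccode : Submodule F4 ((Fin n → F4) × (Fin n → F4))) :
    Submodule F4 ((Fin n → F4) × (Fin n → F4)) where
  carrier := {v | ∀ u ∈ Ccode, hermInner2 u v = 0}
  zero_mem' := by intro u _; simp [hermInner2, hermInner]
  add_mem' := by
    intro v w hv hw u hu
    rw [hermInner2_add_right, hv u hu, hw u hu, add_zero]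
  smul_mem' := by
    intro c v hv u hu
    rw [hermInner2_smul_right, hv u hu, mul_zero]

/-- Hamming weight of a vector. -/
def hammingWt {m : ℕ} (u : Fin m → F4) : ℕ := Nat.card {i : Fin m // u i ≠ 0}

/-- The 2-generator quasi-cyclic code `C(g₁,g₂,ν)` of length `2n` and index 2:
the `F₄`-span of all `([a·ν·g₁]ₙ, [a·g₁]ₙ)` and `([b·g₂]ₙ, [b·ν·g₂]ₙ)`. -/
def Cqc (n : ℕ) (g₁ g₂ ν : Polynomial F4) : Submodule F4 ((Fin n → F4) × (Fin n → F4)) :=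
  Submodule.span F4
    ({x | ∃ a : Polynomial F4, x = (coeffVec n (a * ν * g₁), coeffVec n (a * g₁))} ∪
     {x | ∃ b : Polynomial F4, x = (coeffVec n (b * g₂), coeffVec n (b * ν * g₂))})

/-- The quasi-cyclic code `D`: the `F₄`-span of all `([-ν̄·c·g₁^{⊥h}]ₙ, [c·g₁^{⊥h}]ₙ)`
and `([s·g₂^{⊥h}]ₙ, [-ν̄·s·g₂^{⊥h}]ₙ)`. -/
def Dqc (n : ℕ) (g₁ g₂ ν : Polynomial F4) : Submodule F4 ((Fin n → F4) × (Fin n → F4)) :=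
  Submodule.span F4
    ({x | ∃ c : Polynomial F4,
        x = (coeffVec n (-(conjT n ν) * c * dualGen n g₁), coeffVec n (c * dualGen n g₁))} ∪
     {x | ∃ s : Polynomial F4,
        x = (coeffVec n (s * dualGen n g₂), coeffVec n (-(conjT n ν) * s * dualGen n g₂))})

/-- The quotient ring `R = F₄[X]/(Xⁿ - 1)`. -/
abbrev Rng (n : ℕ) : Type := Polynomial F4 ⧸ Ideal.span ({X ^ n - 1} : Set (Polynomial F4))

/-- The natural projection `F₄[X] → R`. -/
def toRng (n : ℕ) : Polynomial F4 →+* Rng n := Ideal.Quotient.mk _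

/-- The `R`-linear map `R → R × R`, `a ↦ (a·û, a·v̂)`, where `û, v̂` are the images of
`u, v` in `R`. -/
def qcMap (n : ℕ) (u v : Polynomial F4) : Rng n →ₗ[Rng n] Rng n × Rng n :=
  (LinearMap.toSpanSingleton (Rng n) (Rng n) (toRng n u)).prod
    (LinearMap.toSpanSingleton (Rng n) (Rng n) (toRng n v))

/-- If `f - 1` is coprime to `Xⁿ - 1`, and `Xⁿ - 1` divides both `a·g₁·f - b·g₂` and
`a·g₁ - b·g₂·f`, then `Xⁿ - 1` divides `a·g₁` and `b·g₂`. -/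
theorem key_divisibility_step (n : ℕ) (hn : 1 ≤ n) (g₁ g₂ f a b : Polynomial F4)
    (hg₁m : g₁.Monic) (hg₁d : g₁ ∣ X ^ n - 1)
    (hg₂m : g₂.Monic) (hg₂d : g₂ ∣ X ^ n - 1)
    (hcop : IsCoprime (f - 1) (X ^ n - 1))
    (h1 : (X ^ n - 1) ∣ a * g₁ * f - b * g₂)
    (h2 : (X ^ n - 1) ∣ a * g₁ - b * g₂ * f) :
    (X ^ n - 1) ∣ a * g₁ ∧ (X ^ n - 1) ∣ b * g₂ := by
  have h20 : (2 : Polynomial F4) = 0 := CharTwo.two_eq_zero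
  have hA : (X ^ n - 1) ∣ a * g₁ := by
    have h3 : (X ^ n - 1) ∣ (f - 1) * ((f - 1) * (a * g₁)) := by
      have h4 := dvd_sub (h1.mul_right f) h2
      have h5 : (f - 1) * ((f - 1) * (a * g₁))
          = (a * g₁ * f - b * g₂) * f - (a * g₁ - b * g₂ * f) := by
        linear_combination (a * g₁ - f * (a * g₁)) * h20
      rw [h5]
      exact h4
    exact hcop.symm.dvd_of_dvd_mul_left (hcop.symm.dvd_of_dvd_mul_left h3)
  refine ⟨hA, ?_⟩
  have h6 := dvd_sub (hA.mul_right f) h1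
  rwa [sub_sub_cancel] at h6

end
end

section
/- Let F₄ = GF(4), n ≥ 1, and let R = F₄[X]/(Xⁿ−1). Let g₁, g₂ be monic divisors of Xⁿ−1 and ν ∈ F₄[X], and suppose ν−1 and Xⁿ−1 are coprime in F₄[X]. Let φ₁ : R → R × R be the R-linear map a ↦ (a·ν̂·ĝ₁, a·ĝ₁) and φ₂ : R → R × R the map b ↦ (b·ĝ₂, b·ν̂·ĝ₂), where ĝ₁, ĝ₂, ν̂ denote the images of g₁, g₂, ν in R. Then (range φ₁) ⊓ (range φ₂) = ⊥, i.e., the two 1-generator quasi-cyclic codes intersect only in the zero codeword. -/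
open Polynomial

set_option synthInstance.maxHeartbeats 1000000
set_option maxHeartbeats 1000000

noncomputable section

/-- The two 1-generator quasi-cyclic codes `range φ₁` and `range φ₂` intersect only in
the zero codeword. -/
theorem qc_ranges_inf_eq_bot (n : ℕ) (hn : 1 ≤ n) (g₁ g₂ ν : Polynomial F4)
    (hg₁m : g₁.Monic) (hg₁d : g₁ ∣ X ^ n - 1)
    (hg₂m : g₂.Monic) (hg₂d : g₂ ∣ X ^ n - 1)
    (hcop : IsCoprime (ν - 1) (X ^ n - 1)) :
    LinearMap.range (qcMap n (ν * g₁) g₁) ⊓ LinearMap.range (qcMap n g₂ (ν * g₂)) = ⊥ := by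
  obtain ⟨u, w, huw⟩ := hcop
  have h0 : toRng n (X ^ n - 1) = 0 :=
    Ideal.Quotient.eq_zero_iff_mem.mpr (Ideal.subset_span rfl)
  have h1 : toRng n u * (toRng n ν - 1) = 1 := by
    have h := congrArg (toRng n) huw
    rw [map_add, map_mul, map_mul, h0, mul_zero, add_zero, map_sub, map_one] at h
    exact h
  have h2 : (2 : Rng n) = 0 := by
    have h : (2 : Polynomial F4) = 0 := CharTwo.two_eq_zero
    have h' := congrArg (toRng n) h
    rwa [map_ofNat, map_zero] at h'
  rw [eq_bot_iff]
  rintro ⟨x, y⟩ ⟨⟨a, ha⟩, ⟨b, hb⟩⟩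
  have ha1 : a * toRng n (ν * g₁) = x := congrArg Prod.fst ha
  have ha2 : a * toRng n g₁ = y := congrArg Prod.snd ha
  have hb1 : b * toRng n g₂ = x := congrArg Prod.fst hb
  have hb2 : b * toRng n (ν * g₂) = y := congrArg Prod.snd hb
  rw [map_mul] at ha1 hb2
  generalize toRng n ν = v at *
  generalize toRng n u = t at *
  have hx : x = v * y := by rw [← ha1, ← ha2]; ring
  have hy : y = v * x := by rw [← hb1, ← hb2]; ring
  have hx0 : x = 0 := by
    have e : x = v * (v * x) := by rw [← hy]; exact hx
    linear_combination (-(t * (v - 1) + 1) * x) * h1 - t ^ 2 * e + (t ^ 2 * x * (1 - v)) * h2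
  have hy0 : y = 0 := by rw [hy, hx0, mul_zero]
  rw [hx0, hy0]
  exact Submodule.zero_mem _

end
end

section
/- Let F₄ = GF(4), n ≥ 1, and let R = F₄[X]/(Xⁿ−1). Let g₁, g₂ be monic divisors of Xⁿ−1 and ν ∈ F₄[X], and suppose ν−1 and Xⁿ−1 are coprime in F₄[X]. Let φ₁ : R → R × R be a ↦ (a·ν̂·ĝ₁, a·ĝ₁) and φ₂ : R → R × R be b ↦ (b·ĝ₂, b·ν̂·ĝ₂), where ĝ₁, ĝ₂, ν̂ are the images of g₁, g₂, ν in R. Then the F₄-dimension of the submodule (range φ₁) ⊔ (range φ₂) of R × R equals 2n − deg g₁ − deg g₂. -/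
open Polynomial

set_option synthInstance.maxHeartbeats 1000000
set_option maxHeartbeats 1000000

noncomputable section

lemma aux_code {K A : Type*} [Field K] [CommRing A] [Algebra K A] [Module.Finite K A]
    (h2 : (2 : A) = 0) (v g₁ g₂ : A) (hv : IsUnit (v - 1)) (S : Submodule A (A × A))
    (hS : ∀ x, x ∈ S ↔ ∃ a b : A, x = (a * (v * g₁) + b * g₂, a * g₁ + b * (v * g₂))) :
    Module.finrank K ↥(S.restrictScalars K) =
      Module.finrank K ↥((Ideal.span {g₁} : Ideal A).restrictScalars K) +
      Module.finrank K ↥((Ideal.span {g₂} : Ideal A).restrictScalars K) := by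
  let T : (A × A) →ₗ[A] (A × A) :=
    { toFun := fun p => (v * p.1 + p.2, p.1 + v * p.2)
      map_add' := fun p q => by ext <;> simp <;> ring
      map_smul' := fun c p => by ext <;> simp <;> ring }
  let I₁ : Submodule K A := (Ideal.span {g₁} : Ideal A).restrictScalars K
  let I₂ : Submodule K A := (Ideal.span {g₂} : Ideal A).restrictScalars K
  let F : (I₁ × I₂) →ₗ[K] (A × A) :=
    (T.restrictScalars K) ∘ₗ (I₁.subtype.prodMap I₂.subtype)
  have hF : ∀ p, F p = (v * (p.1 : A) + p.2, (p.1 : A) + v * p.2) := fun p => rfl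
  have hT : ∀ x y : A, v * x + y = 0 → x + v * y = 0 → x = 0 ∧ y = 0 := by
    intro x y h1 h2'
    have hu : IsUnit ((v - 1) * (v - 1)) := hv.mul hv
    constructor
    · apply hu.mul_right_eq_zero.1
      linear_combination v * h1 - h2' + (x - v * x) * h2
    · apply hu.mul_right_eq_zero.1
      linear_combination v * h2' - h1 + (y - v * y) * h2
  have hinj : Function.Injective F := by
    rw [← LinearMap.ker_eq_bot, LinearMap.ker_eq_bot']
    rintro ⟨x, y⟩ h
    rw [hF, Prod.mk_eq_zero] at h
    obtain ⟨hx, hy⟩ := hT _ _ h.1 h.2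
    exact Prod.ext (Subtype.ext hx) (Subtype.ext hy)
  have hr : LinearMap.range F = S.restrictScalars K := by
    ext x
    rw [Submodule.restrictScalars_mem, hS, LinearMap.mem_range]
    constructor
    · rintro ⟨⟨⟨p, hp⟩, ⟨q, hq⟩⟩, rfl⟩
      obtain ⟨a, rfl⟩ := Ideal.mem_span_singleton'.1 hp
      obtain ⟨b, rfl⟩ := Ideal.mem_span_singleton'.1 hq
      refine ⟨a, b, ?_⟩
      rw [hF]
      ext <;> simp <;> ring
    · rintro ⟨a, b, rfl⟩
      refine ⟨⟨⟨a * g₁, Ideal.mem_span_singleton'.2 ⟨a, rfl⟩⟩,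
        ⟨b * g₂, Ideal.mem_span_singleton'.2 ⟨b, rfl⟩⟩⟩, ?_⟩
      rw [hF]
      ext <;> simp <;> ring
  rw [← hr, LinearMap.finrank_range_of_inj hinj, Module.finrank_prod]

lemma aux_ideal {K : Type*} [Field K] (f g : K[X]) (hf : f ≠ 0) (hd : g ∣ f) :
    Module.finrank K ↥((Ideal.span {Ideal.Quotient.mk (Ideal.span {f}) g} :
      Ideal (K[X] ⧸ Ideal.span {f})).restrictScalars K) + g.natDegree = f.natDegree := by
  have hfin : Module.Finite K (K[X] ⧸ Ideal.span {f}) :=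
    (AdjoinRoot.powerBasis hf).finite
  have h1 := Submodule.finrank_quotient_add_finrank
    ((Ideal.span {Ideal.Quotient.mk (Ideal.span {f}) g} :
      Ideal (K[X] ⧸ Ideal.span {f})).restrictScalars K)
  have hle : Ideal.span {f} ≤ Ideal.span {g} := Ideal.span_singleton_le_span_singleton.2 hd
  have e := (DoubleQuot.quotQuotEquivQuotOfLEₐ K hle).toLinearEquiv.finrank_eq
  rw [finrank_quotient_span_eq_natDegree, Ideal.map_span, Set.image_singleton] at e
  rw [finrank_quotient_span_eq_natDegree] at h1
  rw [← h1, add_comm, ← e]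
  rfl

/-- The `F₄`-dimension of the 2-generator quasi-cyclic code `range φ₁ ⊔ range φ₂` equals
`2n - deg g₁ - deg g₂`. -/
theorem qc_code_finrank (n : ℕ) (hn : 1 ≤ n) (g₁ g₂ ν : Polynomial F4)
    (hg₁m : g₁.Monic) (hg₁d : g₁ ∣ X ^ n - 1)
    (hg₂m : g₂.Monic) (hg₂d : g₂ ∣ X ^ n - 1)
    (hcop : IsCoprime (ν - 1) (X ^ n - 1)) :
    Module.finrank F4
      ↥(Submodule.restrictScalars F4
        (LinearMap.range (qcMap n (ν * g₁) g₁) ⊔ LinearMap.range (qcMap n g₂ (ν * g₂)))) =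
      2 * n - g₁.natDegree - g₂.natDegree := by
  have hmonic : (X ^ n - 1 : F4[X]).Monic := by
    simpa using monic_X_pow_sub_C (1 : F4) (by omega : n ≠ 0)
  have hne : (X ^ n - 1 : F4[X]) ≠ 0 := hmonic.ne_zero
  have hdeg : (X ^ n - 1 : F4[X]).natDegree = n := by
    simpa using natDegree_X_pow_sub_C (n := n) (r := (1 : F4))
  have hfin : Module.Finite F4 (Rng n) := (AdjoinRoot.powerBasis hne).finite
  have h2 : (2 : Rng n) = 0 := by
    have h : (2 : F4) = 0 := CharTwo.two_eq_zero
    have := congrArg (algebraMap F4 (Rng n)) h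
    simpa only [map_ofNat, map_zero] using this
  have hv : IsUnit (toRng n ν - 1) := by
    obtain ⟨a, b, hab⟩ := hcop
    refine IsUnit.of_mul_eq_one (toRng n a) ?_
    have h0 : toRng n (X ^ n - 1) = 0 :=
      Ideal.Quotient.eq_zero_iff_mem.2 (Ideal.mem_span_singleton_self _)
    have := congrArg (toRng n) hab
    rw [map_add, map_mul, map_mul, h0, map_sub, map_one, mul_zero, add_zero] at this
    rw [mul_comm, this]
  have key := aux_code (K := F4) h2 (toRng n ν) (toRng n g₁) (toRng n g₂) hv
    (LinearMap.range (qcMap n (ν * g₁) g₁) ⊔ LinearMap.range (qcMap n g₂ (ν * g₂))) (by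
      intro x
      rw [Submodule.mem_sup]
      have hq : ∀ (u v : F4[X]) (a : Rng n),
        qcMap n u v a = (a * toRng n u, a * toRng n v) := fun _ _ _ => rfl
      constructor
      · rintro ⟨_, ⟨a, rfl⟩, _, ⟨b, rfl⟩, rfl⟩
        exact ⟨a, b, by rw [hq, hq, map_mul, map_mul, Prod.mk_add_mk]⟩
      · rintro ⟨a, b, rfl⟩
        exact ⟨_, ⟨a, rfl⟩, _, ⟨b, rfl⟩, by rw [hq, hq, map_mul, map_mul, Prod.mk_add_mk]⟩)
  have e1 : Module.finrank F4 ↥((Ideal.span {toRng n g₁} :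
      Ideal (Rng n)).restrictScalars F4) + g₁.natDegree = n :=
    (aux_ideal _ g₁ hne hg₁d).trans hdeg
  have e2 : Module.finrank F4 ↥((Ideal.span {toRng n g₂} :
      Ideal (Rng n)).restrictScalars F4) + g₂.natDegree = n :=
    (aux_ideal _ g₂ hne hg₂d).trans hdeg
  rw [key]
  generalize Module.finrank F4 ↥((Ideal.span {toRng n g₁} :
      Ideal (Rng n)).restrictScalars F4) = r1 at *
  generalize Module.finrank F4 ↥((Ideal.span {toRng n g₂} :
      Ideal (Rng n)).restrictScalars F4) = r2 at *
  omega

end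
end

section
/- Let F₄ = GF(4), let n be odd, and let g₁, g₂ be monic divisors of Xⁿ−1 in F₄[X] with check polynomials h₁ = (Xⁿ−1)/g₁ and h₂ = (Xⁿ−1)/g₂. Then the following are equivalent: (i) for all a, b ∈ F₄[X], ⟨[a·g₁]ₙ, [b·g₂]ₙ⟩_h = 0; (ii) g₂^{⊥h} divides g₁ and g₁^{⊥h} divides g₂ in F₄[X]. -/
open Polynomial

set_option synthInstance.maxHeartbeats 1000000
set_option maxHeartbeats 1000000

noncomputable section

lemma reverse_Xn (n : ℕ) (hn : 0 < n) : (X ^ n - 1 : F4[X]).reverse = -(X ^ n - 1) := by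
  have h : (X ^ n - 1 : F4[X]).natDegree = n := by
    simpa using natDegree_X_pow_sub_C (R := F4) (n := n) (r := 1)
  unfold reverse
  rw [h, reflect_sub, reflect_monomial, revAt_le le_rfl]
  have : reflect n (1 : F4[X]) = X ^ n := by
    have := reflect_monomial (R := F4) n 0
    simpa [revAt_le (Nat.zero_le n)] using this
  rw [this]; simp

lemma dualGen_eq (n : ℕ) (g : F4[X]) :
    dualGen n g = (((X ^ n - 1) / g).map (frobenius F4 2)).reverse := by
  unfold dualGen
  generalize ((X ^ n - 1) / g) = h
  have hd : (h.map (frobenius F4 2)).natDegree = h.natDegree := natDegree_map _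
  rw [as_sum_range' (h.map (frobenius F4 2)).reverse (h.natDegree + 1)
    (Nat.lt_succ_of_le (hd ▸ reverse_natDegree_le _)), ← Finset.sum_range_reflect]
  refine Finset.sum_congr rfl fun j hj => ?_
  have hj' : j ≤ h.natDegree := Nat.lt_succ_iff.1 (Finset.mem_range.1 hj)
  rw [coeff_reverse, hd, revAt_le hj', coeff_map, frobenius_def, ← C_mul_X_pow_eq_monomial]
  have e1 : h.natDegree + 1 - 1 - j = h.natDegree - j := by omega
  have e2 : h.natDegree - (h.natDegree - j) = j := by omega
  rw [e1, e2]

lemma dual_mul (n : ℕ) (hn : 0 < n) (g : F4[X]) (hg : g ∣ X ^ n - 1) (hg0 : g ≠ 0) :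
    (g.map (frobenius F4 2)).reverse * dualGen n g = -(X ^ n - 1) := by
  rw [dualGen_eq, ← reverse_mul_of_domain, ← Polynomial.map_mul,
    EuclideanDomain.mul_div_cancel' hg0 hg]
  simp only [Polynomial.map_sub, Polynomial.map_pow, map_X, Polynomial.map_one]
  exact reverse_Xn n hn

lemma N_monic (n : ℕ) (hn : 0 < n) : (X ^ n - 1 : F4[X]).Monic := by
  simpa using monic_X_pow_sub_C (1 : F4) hn.ne'

def TT (n : ℕ) : F4[X] →ₗ[F4] F4 := (lcoeff F4 0) ∘ₗ (modByMonicHom (X ^ n - 1 : F4[X]))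

lemma TT_apply (n : ℕ) (hn : 0 < n) (p : F4[X]) : TT n p = (p % (X ^ n - 1)).coeff 0 := by
  rw [← modByMonic_eq_mod _ (N_monic n hn)]; rfl

lemma TT_zero (n : ℕ) (hn : 0 < n) (p : F4[X]) (h : (X ^ n - 1) ∣ p) : TT n p = 0 := by
  rw [TT_apply n hn, EuclideanDomain.mod_eq_zero.2 h, coeff_zero]

lemma TT_congr (n : ℕ) (hn : 0 < n) (p q : F4[X]) (h : (X ^ n - 1) ∣ p - q) : TT n p = TT n q := by
  rw [← sub_eq_zero, ← map_sub]; exact TT_zero n hn _ h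

lemma N_degree (n : ℕ) (hn : 0 < n) : (X ^ n - 1 : F4[X]).degree = n := by
  simpa using degree_X_pow_sub_C hn (1 : F4)

lemma TT_X_lt (n k : ℕ) (hn : 0 < n) (hk : k < n) : TT n (X ^ k) = if k = 0 then 1 else 0 := by
  rw [TT_apply n hn, mod_eq_self_iff (N_monic n hn).ne_zero |>.2]
  · simp [coeff_X_pow, eq_comm]
  · rw [N_degree n hn, degree_X_pow]; exact_mod_cast hk

lemma TT_X (n i j : ℕ) (hi : i < n) (hj : j < n) :
    TT n (X ^ (j + (n - i))) = if j = i then 1 else 0 := by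
  have hn : 0 < n := by omega
  by_cases h : i ≤ j
  · have : TT n (X ^ (j + (n - i))) = TT n (X ^ (j - i)) := by
      apply TT_congr n hn
      refine ⟨X ^ (j - i), ?_⟩
      rw [show j + (n - i) = n + (j - i) by omega, pow_add]; ring
    rw [this, TT_X_lt n _ hn (by omega)]
    congr 1; simp; omega
  · rw [TT_X_lt n _ hn (by omega), if_neg (by omega), if_neg (by omega)]

lemma mod_natDegree (n : ℕ) (hn : 0 < n) (p : F4[X]) : (p % (X ^ n - 1)).natDegree < n := by
  by_cases h0 : p % (X ^ n - 1) = 0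
  · rw [h0]; simpa
  · rw [natDegree_lt_iff_degree_lt h0, ← N_degree n hn]
    exact EuclideanDomain.mod_lt _ (N_monic n hn).ne_zero

lemma sub_mod_dvd (n : ℕ) (p : F4[X]) : (X ^ n - 1) ∣ p - p % (X ^ n - 1) :=
  ⟨p / (X ^ n - 1), by
    rw [sub_eq_iff_eq_add]; exact (EuclideanDomain.div_add_mod p (X ^ n - 1)).symm⟩

lemma TT_mul_X (n i : ℕ) (hi : i < n) (p : F4[X]) :
    TT n (p * X ^ (n - i)) = (p % (X ^ n - 1)).coeff i := by
  have hn : 0 < n := by omega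
  have h1 : TT n (p * X ^ (n - i)) = TT n ((p % (X ^ n - 1)) * X ^ (n - i)) := by
    apply TT_congr n hn
    rw [← sub_mul]
    exact (sub_mod_dvd n p).mul_right _
  rw [h1]
  have hd := mod_natDegree n hn p
  generalize p % (X ^ n - 1) = r at hd
  conv_lhs => rw [as_sum_range_C_mul_X_pow' r hd]
  rw [Finset.sum_mul, map_sum]
  have : ∀ j ∈ Finset.range n, TT n (C (r.coeff j) * X ^ j * X ^ (n - i))
      = if j = i then r.coeff j else 0 := by
    intro j hj
    rw [mul_assoc, ← pow_add, ← smul_eq_C_mul, map_smul, TT_X n i j hi (Finset.mem_range.1 hj)]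
    simp
  rw [Finset.sum_congr rfl this]
  simp [hi]

def SS (n : ℕ) (q : F4[X]) : F4[X] :=
  ∑ i : Fin n, C (((q % (X ^ n - 1)).coeff i) ^ 2) * X ^ (n - i)

lemma herm_eq (n : ℕ) (p q : F4[X]) :
    hermInner (coeffVec n p) (coeffVec n q) = TT n (p * SS n q) := by
  unfold SS hermInner coeffVec
  rw [Finset.mul_sum, map_sum]
  refine Finset.sum_congr rfl fun i _ => ?_
  rw [mul_left_comm, ← smul_eq_C_mul, map_smul, TT_mul_X n i i.2, smul_eq_mul, mul_comm]

abbrev AR (n : ℕ) := AdjoinRoot (X ^ n - 1 : F4[X])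

lemma root_pow (n : ℕ) : (AdjoinRoot.root (X ^ n - 1 : F4[X])) ^ n = 1 := by
  have := AdjoinRoot.eval₂_root (X ^ n - 1 : F4[X])
  simpa [sub_eq_zero] using this

def star' (n : ℕ) : F4[X] →+* AR n :=
  eval₂RingHom ((AdjoinRoot.of (X ^ n - 1 : F4[X])).comp (frobenius F4 2))
    ((AdjoinRoot.root (X ^ n - 1 : F4[X])) ^ (n - 1))

lemma mk_SS (n : ℕ) (hn : 0 < n) (q : F4[X]) : AdjoinRoot.mk (X ^ n - 1) (SS n q) = star' n q := by
  have hN : star' n (X ^ n - 1) = 0 := by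
    simp [star', ← pow_mul, mul_comm (n - 1) n]
    rw [pow_mul, root_pow]; simp
  have h1 : star' n q = star' n (q % (X ^ n - 1)) := by
    obtain ⟨c, hc⟩ := sub_mod_dvd n q
    rw [← sub_eq_zero, ← map_sub, hc, map_mul, hN, zero_mul]
  rw [h1]
  unfold SS
  have hd := mod_natDegree n hn q
  generalize q % (X ^ n - 1) = r at hd
  conv_rhs => rw [as_sum_range_C_mul_X_pow' r hd]
  rw [← Fin.sum_univ_eq_sum_range (fun i => C (r.coeff i) * X ^ i) n, map_sum, map_sum]
  refine Finset.sum_congr rfl fun i _ => ?_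
  have hi := i.2
  have : (AdjoinRoot.root (X ^ n - 1 : F4[X])) ^ (n - (i : ℕ))
      = (AdjoinRoot.root (X ^ n - 1 : F4[X]) ^ (n - 1)) ^ (i : ℕ) := by
    rw [← pow_mul]
    have e : (n - 1) * (i : ℕ) + n = (n - i) + n * i := by
      obtain ⟨m, rfl⟩ : ∃ m, n = m + 1 := ⟨n - 1, by omega⟩
      have : (i : ℕ) ≤ m + 1 := hi.le
      zify [this]; simp; ring
    have h2 : (AdjoinRoot.root (X ^ n - 1 : F4[X])) ^ ((n - 1) * (i : ℕ) + n)
       = (AdjoinRoot.root (X ^ n - 1 : F4[X])) ^ ((n - i) + n * (i : ℕ)) := by rw [e]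
    rw [pow_add, pow_add, pow_mul _ n, root_pow] at h2
    simpa using h2.symm
  simp only [star', map_mul, map_pow, AdjoinRoot.mk_C, AdjoinRoot.mk_X, coe_eval₂RingHom, eval₂_C,
    eval₂_X, RingHom.comp_apply, frobenius_def, this]

lemma star_rev (n : ℕ) (hn : 0 < n) (g : F4[X]) :
    AdjoinRoot.mk (X ^ n - 1) (g.map (frobenius F4 2)).reverse
      * ((AdjoinRoot.root (X ^ n - 1 : F4[X])) ^ (n - 1)) ^ (g.map (frobenius F4 2)).natDegree
      = star' n g := by
  set x := AdjoinRoot.root (X ^ n - 1 : F4[X]) with hx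
  have hxy : x * x ^ (n - 1) = 1 := by
    rw [← pow_succ', Nat.sub_add_cancel hn, hx, root_pow]
  letI : Invertible (x ^ (n - 1)) := ⟨x, hxy, by rw [mul_comm]; exact hxy⟩
  have := eval₂_reverse_mul_pow (AdjoinRoot.of (X ^ n - 1 : F4[X])) (x ^ (n - 1))
    (g.map (frobenius F4 2))
  have e : ⅟(x ^ (n - 1)) = x := rfl
  rw [e, eval₂_map] at this
  rw [← AdjoinRoot.aeval_eq, aeval_def]
  exact this

lemma main_iff (n : ℕ) (hn : 0 < n) (g₁ g₂ : F4[X]) (hg₂m : g₂.Monic) (hg₂d : g₂ ∣ X ^ n - 1) :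
    (∀ a b : Polynomial F4,
        hermInner (coeffVec n (a * g₁)) (coeffVec n (b * g₂)) = 0) ↔ dualGen n g₂ ∣ g₁ := by
  have hm := dual_mul n hn g₂ hg₂d hg₂m.ne_zero
  have hx : IsUnit (((AdjoinRoot.root (X ^ n - 1 : F4[X])) ^ (n - 1)) ^
      (g₂.map (frobenius F4 2)).natDegree) :=
    ((IsUnit.of_pow_eq_one (root_pow n) hn.ne').pow _).pow _
  have hG0 : (g₂.map (frobenius F4 2)).reverse ≠ 0 := by
    intro h
    rw [h, zero_mul, eq_comm, neg_eq_zero] at hm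
    exact (N_monic n hn).ne_zero hm
  have key : dualGen n g₂ ∣ g₁ ↔ AdjoinRoot.mk (X ^ n - 1) g₁ * star' n g₂ = 0 := by
    rw [← star_rev n hn, ← mul_assoc, hx.mul_left_eq_zero, ← map_mul, AdjoinRoot.mk_eq_zero,
      ← neg_dvd (a := X ^ n - 1), ← hm, mul_comm g₁, mul_dvd_mul_iff_left hG0]
  rw [key]
  constructor
  · intro h
    rw [← mk_SS n hn, ← map_mul, AdjoinRoot.mk_eq_zero, ← EuclideanDomain.mod_eq_zero]
    ext i
    rw [coeff_zero]
    by_cases hi : i < n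
    · rw [← TT_mul_X n i hi]
      have := h (X ^ (n - i)) 1
      rw [herm_eq, one_mul] at this
      rw [← this]; congr 1; ring
    · exact coeff_eq_zero_of_natDegree_lt (by have := mod_natDegree n hn (g₁ * SS n g₂); omega)
  · intro h a b
    rw [herm_eq]
    apply TT_zero n hn
    rw [← AdjoinRoot.mk_eq_zero, map_mul, mk_SS n hn, map_mul, map_mul, mul_mul_mul_comm,
      mul_comm (_ * star' n b), mul_comm, mul_comm (_ * _) (_ * star' n g₂), h, zero_mul]

lemma herm_symm {m : ℕ} (u v : Fin m → F4) (h : hermInner u v = 0) : hermInner v u = 0 := by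
  have h4 : ∀ x : F4, x ^ 4 = x := by
    intro x
    letI := Fintype.ofFinite F4
    have := FiniteField.pow_card x
    rwa [← Nat.card_eq_fintype_card, GaloisField.card 2 2 (by norm_num)] at this
  have : hermInner v u = (frobenius F4 2) (hermInner u v) := by
    unfold hermInner
    rw [map_sum]
    refine Finset.sum_congr rfl fun i _ => ?_
    rw [frobenius_def, mul_pow, ← pow_mul, h4, mul_comm]
  rw [this, h, map_zero]

/-- For monic divisors `g₁, g₂` of `Xⁿ - 1` (`n` odd), all Hermitian inner products
`⟨[a·g₁]ₙ, [b·g₂]ₙ⟩_h` vanish iff `g₂^{⊥h} ∣ g₁` and `g₁^{⊥h} ∣ g₂`. -/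
theorem herm_inner_zero_iff_dvd (n : ℕ) (hn : Odd n) (g₁ g₂ : Polynomial F4)
    (hg₁m : g₁.Monic) (hg₁d : g₁ ∣ X ^ n - 1)
    (hg₂m : g₂.Monic) (hg₂d : g₂ ∣ X ^ n - 1) :
    (∀ a b : Polynomial F4,
        hermInner (coeffVec n (a * g₁)) (coeffVec n (b * g₂)) = 0) ↔
      (dualGen n g₂ ∣ g₁ ∧ dualGen n g₁ ∣ g₂) := by
  have hn0 : 0 < n := hn.pos
  constructor
  · intro h
    exact ⟨(main_iff n hn0 g₁ g₂ hg₂m hg₂d).1 h,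
      (main_iff n hn0 g₂ g₁ hg₁m hg₁d).1 fun a b => herm_symm _ _ (h b a)⟩
  · intro h
    exact (main_iff n hn0 g₁ g₂ hg₂m hg₂d).2 h.1

end
end

section
/- Let F₄ = GF(4), let n be odd, let g₁, g₂ be monic divisors of Xⁿ−1 in F₄[X], and let ν ∈ F₄[X]. Let C ⊆ F₄^{2n} be the F₄-span of all vectors ([a·ν·g₁]ₙ, [a·g₁]ₙ) and ([b·g₂]ₙ, [b·ν·g₂]ₙ) for a, b ∈ F₄[X], and let D ⊆ F₄^{2n} be the F₄-span of all vectors ([−ν̄·c·g₁^{⊥h}]ₙ, [c·g₁^{⊥h}]ₙ) and ([s·g₂^{⊥h}]ₙ, [−ν̄·s·g₂^{⊥h}]ₙ) for c, s ∈ F₄[X]. Then every vector of D is Hermitian-orthogonal to every vector of C, i.e., D ⊆ C^{⊥h}. -/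
open Polynomial

set_option synthInstance.maxHeartbeats 1000000
set_option maxHeartbeats 1000000

noncomputable section

def cjHom (n : ℕ) : Polynomial F4 →+* Polynomial F4 :=
  eval₂RingHom ((C : F4 →+* Polynomial F4).comp (frobenius F4 2)) (X ^ (n - 1))

lemma cjHom_C (n : ℕ) (a : F4) : cjHom n (C a) = C (a ^ 2) := by
  simp [cjHom, frobenius_def]

lemma cjHom_X (n : ℕ) : cjHom n X = X ^ (n - 1) := by
  simp [cjHom]

lemma F4_pow_four (a : F4) : (a ^ 2) ^ 2 = a := by
  have : Fintype F4 := Fintype.ofFinite _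
  have h := FiniteField.pow_card a
  have hc : Fintype.card F4 = 4 := by
    rw [← Nat.card_eq_fintype_card, GaloisField.card 2 2 (by norm_num)]; norm_num
  rw [hc] at h
  rw [← pow_mul]; exact h

def Tr (n : ℕ) (p : Polynomial F4) : F4 := (p % (X ^ n - 1)).coeff 0

lemma Tr_add (n : ℕ) (p q : Polynomial F4) : Tr n (p + q) = Tr n p + Tr n q := by
  simp [Tr, Polynomial.add_mod]

lemma toRng_X_pow (n : ℕ) : (toRng n X) ^ n = 1 := by
  rw [← sub_eq_zero, ← map_pow, ← map_one (toRng n), ← map_sub]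
  exact Ideal.Quotient.eq_zero_iff_mem.2 (Ideal.mem_span_singleton_self _)

lemma Tr_eq_zero (n : ℕ) (p : Polynomial F4) (h : toRng n p = 0) : Tr n p = 0 := by
  have h1 : (X ^ n - 1 : Polynomial F4) ∣ p :=
    Ideal.mem_span_singleton.1 (Ideal.Quotient.eq_zero_iff_mem.1 h)
  rw [Tr, (EuclideanDomain.mod_eq_zero).2 h1, coeff_zero]

lemma mod_monomial (n : ℕ) (hn : 0 < n) (i : ℕ) (a : F4) :
    (C a * X ^ i) % (X ^ n - 1 : Polynomial F4) = C a * X ^ (i % n) := by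
  have hm : (X ^ n - 1 : Polynomial F4).Monic := monic_X_pow_sub_C 1 hn.ne'
  have hd : (X ^ n - 1 : Polynomial F4) ∣ C a * X ^ i - C a * X ^ (i % n) := by
    have h2 : (X ^ n - 1 : Polynomial F4) ∣ (X ^ n) ^ (i / n) - 1 := by
      simpa using sub_dvd_pow_sub_pow (X ^ n : Polynomial F4) 1 (i / n)
    have h3 : C a * X ^ i - C a * X ^ (i % n)
        = ((X ^ n) ^ (i / n) - 1) * (C a * X ^ (i % n) : Polynomial F4) := by
      conv_lhs => rw [← Nat.div_add_mod i n]
      rw [Nat.mul_add_mod, Nat.mod_mod, pow_add, pow_mul]; ring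
    rw [h3]; exact h2.mul_right _
  have h4 := (EuclideanDomain.mod_eq_zero).2 hd
  rw [Polynomial.sub_mod, sub_eq_zero] at h4
  rw [h4]
  apply (Polynomial.mod_eq_self_iff hm.ne_zero).2
  · refine lt_of_le_of_lt (degree_C_mul_X_pow_le _ _) ?_
    have : (X ^ n - 1 : Polynomial F4).degree = n := degree_X_pow_sub_C hn 1
    rw [this]; exact_mod_cast Nat.mod_lt _ hn

lemma coeffVec_add (n : ℕ) (p q : Polynomial F4) :
    coeffVec n (p + q) = coeffVec n p + coeffVec n q := by
  funext i; simp [coeffVec, Polynomial.add_mod]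

lemma hermInner_add_left {m : ℕ} (u v w : Fin m → F4) :
    hermInner (u + v) w = hermInner u w + hermInner v w := by
  simp only [hermInner, Pi.add_apply, add_mul, Finset.sum_add_distrib]

lemma mod_key (n : ℕ) (hn : 0 < n) (i j : ℕ) :
    (i + (n - 1) * j) % n = 0 ↔ i % n = j % n := by
  obtain ⟨m, rfl⟩ : ∃ m, n = m + 1 := ⟨n - 1, by omega⟩
  have h1 : (i + m * j) + j = i + (m + 1) * j := by ring
  have h2 : ((i + m * j) + j) % (m + 1) = i % (m + 1) := by rw [h1, Nat.add_mul_mod_self_left]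
  change (i + m * j) % (m + 1) = 0 ↔ _
  constructor
  · intro h
    rw [← h2, Nat.add_mod, h]; simp
  · intro h
    rw [← h2] at h
    have h3 : (i + m * j) + j ≡ 0 + j [MOD m + 1] := by
      simpa [Nat.ModEq] using h
    simpa [Nat.ModEq] using Nat.ModEq.add_right_cancel' _ h3

lemma hermInner_eq_Tr (n : ℕ) (hn : 0 < n) (p q : Polynomial F4) :
    hermInner (coeffVec n p) (coeffVec n q) = Tr n (p * cjHom n q) := by
  induction p using Polynomial.induction_on' with
  | add p r hp hr => rw [coeffVec_add, hermInner_add_left, hp, hr, add_mul, Tr_add]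
  | monomial i a =>
    induction q using Polynomial.induction_on' with
    | add p r hp hr => rw [coeffVec_add, hermInner_add_right, hp, hr, map_add, mul_add, Tr_add]
    | monomial j b =>
      have e : C a * X ^ i * cjHom n (C b * X ^ j)
          = C (a * b ^ 2) * X ^ (i + (n - 1) * j) := by
        rw [map_mul, map_pow, cjHom_C, cjHom_X, C_mul, pow_add, pow_mul]; ring
      rw [← C_mul_X_pow_eq_monomial, ← C_mul_X_pow_eq_monomial, e, Tr, mod_monomial n hn]
      simp only [hermInner, coeffVec, mod_monomial n hn, coeff_C_mul, coeff_X_pow]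
      rw [Finset.sum_eq_single (⟨i % n, Nat.mod_lt _ hn⟩ : Fin n)]
      · have := mod_key n hn i j
        by_cases h : i % n = j % n
        · simp [h, this.2 h]
        · have h' : ¬ (0 = (i + (n - 1) * j) % n) := fun h' => h (this.1 h'.symm)
          simp [h, h']
      · intro k _ hk
        have : ¬ ((k : ℕ) = i % n) := fun h => hk (Fin.ext h)
        simp [this]
      · simp

lemma toRng_mod (n : ℕ) (p : Polynomial F4) : toRng n (p % (X ^ n - 1)) = toRng n p := by
  have h : toRng n (X ^ n - 1) = 0 := by
    rw [map_sub, map_pow, toRng_X_pow, map_one, sub_self]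
  conv_rhs => rw [← EuclideanDomain.mod_add_div p (X ^ n - 1)]
  rw [map_add, map_mul, h, zero_mul, add_zero]

lemma toRng_X_pow_mul_eq (n : ℕ) (a b k l : ℕ) (h : a + n * k = b + n * l) :
    (toRng n X) ^ a = (toRng n X) ^ b := by
  have := congrArg (fun e => (toRng n X) ^ e) h
  simpa [pow_add, pow_mul, toRng_X_pow] using this

lemma cj_conjT (n : ℕ) (hn : 0 < n) (f : Polynomial F4) :
    toRng n (cjHom n (conjT n f)) = toRng n f := by
  rw [← toRng_mod n f]
  unfold conjT
  generalize hr : f % (X ^ n - 1) = r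
  have hdeg : r.natDegree < n := by
    have hm : (X ^ n - 1 : Polynomial F4).degree = n := degree_X_pow_sub_C hn 1
    have h0 : (X ^ n - 1 : Polynomial F4) ≠ 0 := by
      intro h; rw [h] at hm; simp at hm
    have h1 : r.degree < (X ^ n - 1 : Polynomial F4).degree := by
      rw [← hr]; exact EuclideanDomain.mod_lt f h0
    rw [hm] at h1
    by_cases hz : r = 0
    · simp [hz, hn]
    · exact (natDegree_lt_iff_degree_lt hz).2 h1
  conv_rhs => rw [r.as_sum_range_C_mul_X_pow' hdeg, Finset.range_eq_Ico,
    Finset.sum_eq_sum_Ico_succ_bot hn]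
  rw [map_add, map_add, cjHom_C, F4_pow_four, map_sum, map_sum, map_add, map_sum]
  congr 1
  · simp
  · refine Finset.sum_congr rfl fun i hi => ?_
    rw [Finset.mem_Ico] at hi
    have hc : cjHom n (C (r.coeff i ^ 2)) = C (r.coeff i) := by rw [cjHom_C, F4_pow_four]
    rw [map_mul, hc, map_pow, cjHom_X, ← pow_mul, map_mul, map_mul, map_pow, map_pow]
    congr 1
    obtain ⟨m, rfl⟩ : ∃ m, n = m + 1 := ⟨n - 1, by omega⟩
    obtain ⟨k, hk⟩ : ∃ k, m + 1 = i + k := ⟨m + 1 - i, by omega⟩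
    have e : m + 1 - i = k := by omega
    rw [e]
    refine toRng_X_pow_mul_eq _ _ _ 1 k ?_
    change m * k + (m + 1) * 1 = i + (m + 1) * k
    have h5 : (m + 1) * k = m * k + k := by ring
    omega

lemma cj_dualGen (n : ℕ) (hn : 0 < n) (g : Polynomial F4) (hg : g.Monic)
    (hd : g ∣ X ^ n - 1) : toRng n g * toRng n (cjHom n (dualGen n g)) = 0 := by
  have hgh : g * ((X ^ n - 1) / g) = X ^ n - 1 := EuclideanDomain.mul_div_cancel' hg.ne_zero hd
  unfold dualGen
  generalize (X ^ n - 1) / g = h at *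
  have key : toRng n (cjHom n (∑ j ∈ Finset.range (h.natDegree + 1),
      C (h.coeff j ^ 2) * X ^ (h.natDegree - j)))
      = (toRng n X) ^ ((n - 1) * h.natDegree) * toRng n h := by
    have hs := congrArg (toRng n) h.as_sum_range_C_mul_X_pow
    rw [hs, map_sum, map_sum, map_sum, Finset.mul_sum]
    refine Finset.sum_congr rfl fun j hj => ?_
    have hj' : j ≤ h.natDegree := by
      have := Finset.mem_range.1 hj; omega
    rw [map_mul, cjHom_C, F4_pow_four, map_pow, cjHom_X, map_mul, map_mul, ← pow_mul, map_pow,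
      map_pow, mul_left_comm, ← pow_add]
    congr 1
    obtain ⟨m, rfl⟩ : ∃ m, n = m + 1 := ⟨n - 1, by omega⟩
    obtain ⟨k, hk⟩ : ∃ k, h.natDegree = j + k := ⟨h.natDegree - j, by omega⟩
    refine toRng_X_pow_mul_eq _ _ _ j 0 ?_
    rw [hk]
    simp only [Nat.add_sub_cancel_left, Nat.add_sub_cancel]
    ring
  rw [key, mul_left_comm, ← map_mul, hgh, map_sub, map_pow, toRng_X_pow, map_one, sub_self,
    mul_zero]

/-- Every vector of `D` is Hermitian-orthogonal to every vector of `C`, i.e. `D ⊆ C^{⊥h}`. -/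
theorem D_subset_herm_dual_C (n : ℕ) (hn : Odd n) (g₁ g₂ ν : Polynomial F4)
    (hg₁m : g₁.Monic) (hg₁d : g₁ ∣ X ^ n - 1)
    (hg₂m : g₂.Monic) (hg₂d : g₂ ∣ X ^ n - 1) :
    ∀ v ∈ Dqc n g₁ g₂ ν, ∀ u ∈ Cqc n g₁ g₂ ν, hermInner2 u v = 0 := by
  have hn0 : 0 < n := hn.pos
  have k1 := cj_dualGen n hn0 g₁ hg₁m hg₁d
  have k2 := cj_dualGen n hn0 g₂ hg₂m hg₂d
  have kν := cj_conjT n hn0 ν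
  intro v hv u hu
  have hle : Dqc n g₁ g₂ ν ≤ hermDualPair (Cqc n g₁ g₂ ν) := by
    refine Submodule.span_le.2 ?_
    intro v hv u hu
    refine Submodule.span_induction (p := fun u _ => hermInner2 u v = 0) ?_ ?_ ?_ ?_ hu
    · rintro x (⟨a, rfl⟩ | ⟨a, rfl⟩) <;> rcases hv with (⟨c, rfl⟩ | ⟨c, rfl⟩) <;>
        simp only [hermInner2, hermInner_eq_Tr n hn0, ← Tr_add] <;>
        refine Tr_eq_zero _ _ ?_ <;>
        simp only [map_add, map_mul, map_neg, kν]
      · linear_combination (toRng n a * toRng n (cjHom n c) * (1 - toRng n ν ^ 2)) * k1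
      · ring
      · ring
      · linear_combination (toRng n a * toRng n (cjHom n c) * (1 - toRng n ν ^ 2)) * k2
    · simp [hermInner2, hermInner]
    · intro x y _ _ hx hy
      simp only [hermInner2, Prod.fst_add, Prod.snd_add, hermInner_add_left] at *
      linear_combination hx + hy
    · intro c x _ hx
      have : hermInner2 (c • x) v = c * hermInner2 x v := by
        simp only [hermInner2, hermInner, Prod.smul_fst, Prod.smul_snd, Pi.smul_apply,
          smul_eq_mul, mul_add, Finset.mul_sum, mul_assoc]
      rw [this, hx, mul_zero]
  exact hle hv u hu

end
end
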